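/- Let ν > 0 and ε > 0. Then there exists k₀ ∈ ℕ such that for every integer k ≥ k₀, every φ ∈ (0, π/2] satisfying cos φ − (π/2 − φ)·sin φ > 0 and sin φ / (cos φ − (π/2 − φ)·sin φ) = ν/(kπ), and every real number j which is the k-th positive zero of J_ν, one has j < ν/sin φ − (1 − ε)·π/4. -/

import Mathlib

open Real Set

/-- The Bessel function of the first kind of order `ν`. -/
noncomputable def besselJ (ν x : ℝ) : ℝ :=
  ∑' m : ℕ, (-1 : ℝ) ^ m / (m.factorial * Real.Gamma (m + ν + 1)) * (x / 2) ^ (2 * (m : ℝ) + ν)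

/-- `j` is the `k`-th positive zero of the Bessel function `J_ν`. -/
def IsKthBesselZero (ν : ℝ) (k : ℕ) (j : ℝ) : Prop :=
  0 < j ∧ besselJ ν j = 0 ∧
    {t : ℝ | t ∈ Set.Ioo 0 j ∧ besselJ ν t = 0}.encard = (k - 1 : ℕ)


noncomputable def bE (ν y : ℝ) : ℝ :=
  ∑' m : ℕ, (-1 : ℝ) ^ m / (m.factorial * Real.Gamma (m + ν + 1)) * y ^ m

lemma gamma_lower (ν : ℝ) (hν : 0 < ν) (m : ℕ) :
    Real.Gamma (ν + 1) ≤ Real.Gamma (m + ν + 1) := by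
  induction m with
  | zero => simp
  | succ n ih =>
    have h : ((n + 1 : ℕ) : ℝ) + ν + 1 = ((n : ℝ) + ν + 1) + 1 := by push_cast; ring
    rw [h, Real.Gamma_add_one (s := (n : ℝ) + ν + 1) (by positivity)]
    have : 0 < Real.Gamma ((n : ℝ) + ν + 1) := Real.Gamma_pos_of_pos (by positivity)
    nlinarith [(Nat.cast_nonneg n : (0 : ℝ) ≤ n)]

lemma coef_bound (ν : ℝ) (hν : 0 < ν) (m : ℕ) :
    ‖(-1 : ℝ) ^ m / (m.factorial * Real.Gamma (m + ν + 1))‖ ≤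
      (Real.Gamma (ν + 1))⁻¹ / m.factorial := by
  have h1 : 0 < Real.Gamma (ν + 1) := Real.Gamma_pos_of_pos (by positivity)
  have h2 := gamma_lower ν hν m
  have h3 : (0 : ℝ) < m.factorial := by positivity
  rw [norm_div, norm_pow, norm_neg, norm_one, one_pow, Real.norm_eq_abs,
    abs_of_pos (by nlinarith [mul_pos h3 (h1.trans_le h2)]), div_eq_mul_inv, one_mul, mul_inv, div_eq_mul_inv, mul_comm]
  gcongr

lemma bE_summable (ν : ℝ) (hν : 0 < ν) (y : ℝ) :
    Summable (fun m : ℕ => (-1 : ℝ) ^ m / (m.factorial * Real.Gamma (m + ν + 1)) * y ^ m) := by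
  refine Summable.of_norm_bounded (g := fun m : ℕ => (Real.Gamma (ν + 1))⁻¹ * (|y| ^ m / m.factorial))
    ((Real.summable_pow_div_factorial |y|).mul_left _) (fun m => ?_)
  rw [norm_mul, norm_pow, Real.norm_eq_abs y]
  calc _ ≤ (Real.Gamma (ν + 1))⁻¹ / m.factorial * |y| ^ m := by
        gcongr; exact coef_bound ν hν m
    _ = _ := by ring

lemma bE_hasDeriv (ν : ℝ) (hν : 0 < ν) (y : ℝ) :
    HasDerivAt (bE ν) (- bE (ν + 1) y) y := by
  set R := |y| + 1
  have hR : 0 < R := by positivity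
  set c := (Real.Gamma (ν + 1))⁻¹
  have hc : 0 < c := inv_pos.2 (Real.Gamma_pos_of_pos (by positivity))
  have hu : Summable (fun m : ℕ => c / m.factorial * (m * R ^ (m - 1))) := by
    rw [← summable_nat_add_iff 1]
    refine ((Real.summable_pow_div_factorial R).mul_left c).congr (fun m => ?_)
    rw [Nat.factorial_succ]; push_cast
    have : (m.factorial : ℝ) ≠ 0 := by positivity
    have : (m : ℝ) + 1 ≠ 0 := by positivity
    try simp only [Nat.add_sub_cancel]
    field_simp
    try simp
  have key := hasDerivAt_tsum_of_isPreconnected (𝕜 := ℝ) (t := Metric.ball (0 : ℝ) R)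
    (g := fun (m : ℕ) (z : ℝ) => (-1 : ℝ) ^ m / (m.factorial * Real.Gamma (m + ν + 1)) * z ^ m)
    (g' := fun (m : ℕ) (z : ℝ) => (-1 : ℝ) ^ m / (m.factorial * Real.Gamma (m + ν + 1)) * (m * z ^ (m - 1)))
    (y₀ := 0) (y := y) hu Metric.isOpen_ball (convex_ball _ _).isPreconnected
    (fun n z _ => (hasDerivAt_pow n z).const_mul _)
    (fun n z hz => by
      rw [norm_mul, norm_mul, norm_pow]
      have : ‖z‖ ≤ R := by simpa using (mem_ball_zero_iff.1 hz).le
      have h := coef_bound ν hν n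
      rw [Real.norm_natCast]
      gcongr)
    (by simpa using hR) (bE_summable ν hν 0) (by simp [R])
  refine key.congr_deriv ?_
  have hs : Summable (fun m : ℕ => (-1 : ℝ) ^ m / (m.factorial * Real.Gamma (m + ν + 1)) * (m * y ^ (m - 1))) := by
    refine Summable.of_norm_bounded hu (fun n => ?_)
    rw [norm_mul, norm_mul, norm_pow]
    have : ‖y‖ ≤ R := by simp [R]
    have h := coef_bound ν hν n
    rw [Real.norm_natCast]
    gcongr
  rw [hs.tsum_eq_zero_add, bE, ← tsum_neg]
  simp only [Nat.cast_zero, zero_mul, mul_zero, zero_add]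
  refine tsum_congr (fun m => ?_)
  have h : ((m + 1 : ℕ) : ℝ) + ν + 1 = (m : ℝ) + (ν + 1) + 1 := by push_cast; ring
  rw [h, Nat.factorial_succ]; push_cast
  have : (m.factorial : ℝ) ≠ 0 := by positivity
  have : (m : ℝ) + 1 ≠ 0 := by positivity
  have : Real.Gamma ((m : ℝ) + (ν + 1) + 1) ≠ 0 := (Real.Gamma_pos_of_pos (by positivity)).ne'
  simp only [pow_succ]
  field_simp

lemma bE_rec (ν : ℝ) (hν : 0 < ν) (y : ℝ) :
    bE ν y = (ν + 1) * bE (ν + 1) y - y * bE (ν + 2) y := by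
  have h1 := (bE_summable (ν + 1) (by positivity) y).mul_left (ν + 1)
  have h2 := (bE_summable (ν + 2) (by positivity) y).mul_left y
  have h0 := bE_summable ν hν y
  unfold bE
  rw [← tsum_mul_left, ← tsum_mul_left, h0.tsum_eq_zero_add, h1.tsum_eq_zero_add]
  have h1' := (summable_nat_add_iff 1).2 h1
  rw [add_sub_assoc, ← h1'.tsum_sub h2]
  congr 1
  · have : Real.Gamma (ν + 1 + 1) = (ν + 1) * Real.Gamma (ν + 1) := Real.Gamma_add_one (by positivity)
    have h3 : Real.Gamma (ν + 1) ≠ 0 := (Real.Gamma_pos_of_pos (by positivity)).ne'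
    simp [this]
    field_simp
  · refine tsum_congr (fun m => ?_)
    have e1 : ((m + 1 : ℕ) : ℝ) + ν + 1 = (m : ℝ) + ν + 2 := by push_cast; ring
    have e2 : ((m + 1 : ℕ) : ℝ) + (ν + 1) + 1 = ((m : ℝ) + ν + 2) + 1 := by push_cast; ring
    have e3 : (m : ℝ) + (ν + 2) + 1 = ((m : ℝ) + ν + 2) + 1 := by push_cast; ring
    rw [e1, e2, e3, Nat.factorial_succ, Real.Gamma_add_one (by positivity)]; push_cast
    have : (m.factorial : ℝ) ≠ 0 := by positivity
    have : (m : ℝ) + 1 ≠ 0 := by positivity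
    have : (m : ℝ) + ν + 2 ≠ 0 := by positivity
    have : Real.Gamma ((m : ℝ) + ν + 2) ≠ 0 := (Real.Gamma_pos_of_pos (by positivity)).ne'
    simp only [pow_succ]
    field_simp
    ring

lemma besselJ_eq (ν x : ℝ) (hx : 0 < x) : besselJ ν x = (x / 2) ^ ν * bE ν (x ^ 2 / 4) := by
  unfold besselJ bE
  rw [← tsum_mul_left]
  refine tsum_congr (fun m => ?_)
  rw [Real.rpow_add (by positivity), Real.rpow_mul (by positivity), Real.rpow_natCast]
  have : (x / 2) ^ (2 : ℝ) = x ^ 2 / 4 := by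
    rw [show (2 : ℝ) = ((2 : ℕ) : ℝ) by norm_num, Real.rpow_natCast]; ring
  rw [this]; ring

lemma besselJ_zero_iff (ν x : ℝ) (hx : 0 < x) : besselJ ν x = 0 ↔ bE ν (x ^ 2 / 4) = 0 := by
  rw [besselJ_eq ν x hx]
  have : (x / 2) ^ ν ≠ 0 := (Real.rpow_pos_of_pos (by positivity) ν).ne'
  simp [this]

/-- Rolle upward -/
lemma rolle_up (ν : ℝ) (hν : 0 < ν) (a b : ℝ) (ha : 0 < a) (hab : a < b)
    (h1 : bE ν (a ^ 2 / 4) = 0) (h2 : bE ν (b ^ 2 / 4) = 0) :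
    ∃ c ∈ Ioo a b, bE (ν + 1) (c ^ 2 / 4) = 0 := by
  have hd : ∀ x : ℝ, HasDerivAt (fun x : ℝ => bE ν (x ^ 2 / 4)) (- bE (ν + 1) (x ^ 2 / 4) * (x / 2)) x := by
    intro x
    have h := (bE_hasDeriv ν hν (x ^ 2 / 4)).comp x (((hasDerivAt_pow 2 x).div_const 4))
    refine h.congr_deriv ?_
    push_cast; ring
  obtain ⟨c, hc, h⟩ := exists_hasDerivAt_eq_zero (f := fun x : ℝ => bE ν (x ^ 2 / 4)) hab
    (fun x _ => (hd x).continuousAt.continuousWithinAt) (by simp [h1, h2]) (fun x _ => hd x)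
  refine ⟨c, hc, ?_⟩
  have : 0 < c := ha.trans hc.1
  simpa [this.ne'] using h

/-- Rolle downward -/
lemma rolle_down (ν : ℝ) (hν : 0 < ν) (a b : ℝ) (ha : 0 ≤ a) (hab : a < b)
    (h1 : a = 0 ∨ bE (ν + 1) (a ^ 2 / 4) = 0) (h2 : bE (ν + 1) (b ^ 2 / 4) = 0) :
    ∃ c ∈ Ioo a b, bE ν (c ^ 2 / 4) = 0 := by
  have hd : ∀ y : ℝ, 0 < y → HasDerivAt (fun y : ℝ => y ^ (ν + 1) * bE (ν + 1) y) (y ^ ν * bE ν y) y := by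
    intro y hy
    have h := (Real.hasDerivAt_rpow_const (x := y) (p := ν + 1) (Or.inl hy.ne')).mul
      (bE_hasDeriv (ν + 1) (by positivity) y)
    refine h.congr_deriv ?_
    rw [bE_rec ν hν y, show ν + 1 + 1 = ν + 2 by ring, Real.rpow_add hy, add_sub_cancel_right, Real.rpow_one]
    ring
  have hab' : a ^ 2 / 4 < b ^ 2 / 4 := by gcongr
  obtain ⟨c, hc, h⟩ := exists_hasDerivAt_eq_zero (f := fun y : ℝ => y ^ (ν + 1) * bE (ν + 1) y)
    (f' := fun y => y ^ ν * bE ν y) hab'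
    (fun x _ => ((Real.continuousAt_rpow_const x _ (Or.inr (by positivity))).mul
      (bE_hasDeriv (ν + 1) (by positivity) x).continuousAt).continuousWithinAt)
    (by
      rcases h1 with h1 | h1
      · simp [h1, h2, Real.zero_rpow (show ν + 1 ≠ 0 by positivity)]
      · simp [h1, h2])
    (fun x hx => hd x (lt_of_le_of_lt (by positivity) hx.1))
  have hc0 : 0 < c := lt_of_le_of_lt (by positivity) hc.1
  have hs : (2 * √c) ^ 2 / 4 = c := by rw [mul_pow, Real.sq_sqrt hc0.le]; ring
  refine ⟨2 * √c, ⟨?_, ?_⟩, ?_⟩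
  · refine lt_of_pow_lt_pow_left₀ 2 (by positivity) ?_
    linarith [hc.1]
  · refine lt_of_pow_lt_pow_left₀ 2 (by linarith) ?_
    linarith [hc.2]
  · rw [hs]
    have : c ^ ν ≠ 0 := (Real.rpow_pos_of_pos hc0 ν).ne'
    simpa [this] using h

noncomputable def pP (β x : ℝ) : ℝ := ∫ t in (-1 : ℝ)..1, (1 - t ^ 2) ^ β * Real.cos (x * t)

noncomputable def bM (β : ℝ) (m : ℕ) : ℝ := ∫ t in (-1 : ℝ)..1, (1 - t ^ 2) ^ β * t ^ (2 * m)

lemma cont_w (β : ℝ) (hβ : 0 < β) : Continuous (fun t : ℝ => (1 - t ^ 2) ^ β) := by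
  refine Continuous.rpow_const (by fun_prop) (fun _ => Or.inr hβ.le)

lemma bM_rec (β : ℝ) (hβ : 0 < β) (m : ℕ) :
    (2 * (m : ℝ) + 1) * (bM β m - bM β (m + 1)) = 2 * (β + 1) * bM β (m + 1) := by
  have hc := cont_w β hβ
  have hi : ∀ n : ℕ, IntervalIntegrable (fun t : ℝ => (1 - t ^ 2) ^ β * t ^ (2 * n)) MeasureTheory.volume (-1) 1 :=
    fun n => (hc.mul (by fun_prop)).intervalIntegrable _ _
  have hd : ∀ t : ℝ, HasDerivAt (fun t : ℝ => (1 - t ^ 2) ^ (β + 1) * t ^ (2 * m + 1))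
      ((-(2 * t) * (β + 1) * (1 - t ^ 2) ^ β) * t ^ (2 * m + 1) +
        (1 - t ^ 2) ^ (β + 1) * ((2 * (m : ℝ) + 1) * t ^ (2 * m))) t := by
    intro t
    have h1 : HasDerivAt (fun t : ℝ => 1 - t ^ 2) (-(2 * t)) t := by
      simpa using (hasDerivAt_pow 2 t).const_sub 1
    have h2 := h1.rpow_const (p := β + 1) (Or.inr (by linarith))
    have h3 := h2.mul (hasDerivAt_pow (2 * m + 1) t)
    refine h3.congr_deriv ?_
    simp only [add_sub_cancel_right, Nat.add_sub_cancel]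
    push_cast; ring
  have hF := intervalIntegral.integral_eq_sub_of_hasDerivAt (a := -1) (b := 1) (fun t _ => hd t)
    (Continuous.intervalIntegrable (by
      have := cont_w (β + 1) (by positivity)
      fun_prop) _ _)
  have e : ∀ t ∈ uIcc (-1 : ℝ) 1, (-(2 * t) * (β + 1) * (1 - t ^ 2) ^ β) * t ^ (2 * m + 1) +
        (1 - t ^ 2) ^ (β + 1) * ((2 * (m : ℝ) + 1) * t ^ (2 * m)) =
      (2 * (m : ℝ) + 1) * ((1 - t ^ 2) ^ β * t ^ (2 * m) - (1 - t ^ 2) ^ β * t ^ (2 * (m + 1)))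
        - 2 * (β + 1) * ((1 - t ^ 2) ^ β * t ^ (2 * (m + 1))) := by
    intro t ht
    rw [uIcc_of_le (by norm_num)] at ht
    have : 0 ≤ 1 - t ^ 2 := by nlinarith [ht.1, ht.2]
    rw [Real.rpow_add_one' this (by positivity)]
    ring
  rw [intervalIntegral.integral_congr e, intervalIntegral.integral_sub
    (((hi m).sub (hi (m + 1))).const_mul _) ((hi (m + 1)).const_mul _),
    intervalIntegral.integral_const_mul, intervalIntegral.integral_const_mul,
    intervalIntegral.integral_sub (hi m) (hi (m + 1))] at hF
  have z : ((1 : ℝ) - 1 ^ 2) ^ (β + 1) = 0 := by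
    rw [one_pow, sub_self, Real.zero_rpow (by positivity)]
  have z' : ((1 : ℝ) - (-1) ^ 2) ^ (β + 1) = 0 := by
    rw [neg_one_sq, sub_self, Real.zero_rpow (by positivity)]
  rw [z, z'] at hF
  simp only [zero_mul, sub_zero] at hF
  unfold bM
  linarith

lemma bM_eq (ν : ℝ) (hν : 1 / 2 < ν) (m : ℕ) :
    bM (ν - 1 / 2) m = bM (ν - 1 / 2) 0 * Real.Gamma (ν + 1) *
      ((2 * m).factorial / (4 ^ m * m.factorial * Real.Gamma (m + ν + 1))) := by
  induction m with
  | zero =>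
    have : Real.Gamma (ν + 1) ≠ 0 := (Real.Gamma_pos_of_pos (by linarith)).ne'
    simp; field_simp
  | succ n ih =>
    have h := bM_rec (ν - 1 / 2) (by linarith) n
    rw [ih] at h
    have e1 : ((n + 1 : ℕ) : ℝ) + ν + 1 = ((n : ℝ) + ν + 1) + 1 := by push_cast; ring
    have hp : (0 : ℝ) < (n : ℝ) + ν + 1 := by positivity
    rw [e1, Real.Gamma_add_one hp.ne', show 2 * (n + 1) = 2 * n + 1 + 1 by ring,
      Nat.factorial_succ, Nat.factorial_succ, Nat.factorial_succ, pow_succ]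
    push_cast
    set G := Real.Gamma ((n : ℝ) + ν + 1)
    have hG : G ≠ 0 := (Real.Gamma_pos_of_pos hp).ne'
    set A := bM (ν - 1 / 2) 0 * Real.Gamma (ν + 1)
    set B := bM (ν - 1 / 2) (n + 1)
    have hB : 2 * ((n : ℝ) + ν + 1) * B = (2 * n + 1) * (A * ((2 * n).factorial / (4 ^ n * n.factorial * G))) := by
      linarith
    have hB' : B = (2 * n + 1) * (A * ((2 * n).factorial / (4 ^ n * n.factorial * G))) / (2 * ((n : ℝ) + ν + 1)) := by
      rw [← hB]; field_simp
    rw [hB']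
    field_simp
    ring

lemma bM_zero_pos (β : ℝ) (hβ : 0 < β) : 0 < bM β 0 := by
  unfold bM
  refine intervalIntegral.intervalIntegral_pos_of_pos_on ?_ ?_ (by norm_num)
  · exact ((cont_w β hβ).mul (by fun_prop)).intervalIntegrable _ _
  · intro t ht
    have : 0 < 1 - t ^ 2 := by nlinarith [ht.1, ht.2]
    simpa using Real.rpow_pos_of_pos this β

lemma poisson (ν : ℝ) (hν : 1 / 2 < ν) (x : ℝ) :
    pP (ν - 1 / 2) x = bM (ν - 1 / 2) 0 * Real.Gamma (ν + 1) * bE ν (x ^ 2 / 4) := by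
  have hβ : 0 < ν - 1 / 2 := by linarith
  have hc := cont_w _ hβ
  have key := intervalIntegral.hasSum_integral_of_dominated_convergence (a := -1) (b := 1)
    (μ := MeasureTheory.volume)
    (F := fun (n : ℕ) (t : ℝ) => (1 - t ^ 2) ^ (ν - 1 / 2) * ((-1) ^ n * (x * t) ^ (2 * n) / (2 * n).factorial))
    (f := fun t => (1 - t ^ 2) ^ (ν - 1 / 2) * Real.cos (x * t))
    (fun n _ => |x| ^ (2 * n) / (2 * n).factorial)
    (fun n => (hc.mul (by fun_prop)).aestronglyMeasurable)
    (fun n => Filter.Eventually.of_forall (fun t ht => by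
      rw [uIoc_of_le (by norm_num)] at ht
      have h0 : 0 ≤ 1 - t ^ 2 := by nlinarith [ht.1, ht.2]
      have h1 : (1 - t ^ 2) ^ (ν - 1 / 2) ≤ 1 := Real.rpow_le_one h0 (by nlinarith) hβ.le
      have h2 : |t| ≤ 1 := abs_le.2 ⟨ht.1.le, ht.2⟩
      rw [norm_mul, Real.norm_eq_abs, abs_of_nonneg (Real.rpow_nonneg h0 _), norm_div, norm_mul, norm_pow,
        norm_neg, norm_one, one_pow, one_mul, norm_pow, norm_mul, Real.norm_natCast, Real.norm_eq_abs,
        Real.norm_eq_abs]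
      calc _ ≤ 1 * ((|x| * 1) ^ (2 * n) / (2 * n).factorial) := by gcongr
        _ = _ := by simp))
    (Filter.Eventually.of_forall (fun t _ => by
      exact (Real.summable_pow_div_factorial |x|).comp_injective
        (mul_right_injective₀ (two_ne_zero))))
    (by simp)
    (Filter.Eventually.of_forall (fun t _ => (Real.hasSum_cos (x * t)).mul_left _))
  unfold pP
  rw [← key.tsum_eq, bE, ← tsum_mul_left]
  refine tsum_congr (fun n => ?_)
  have : (fun t : ℝ => (1 - t ^ 2) ^ (ν - 1 / 2) * ((-1) ^ n * (x * t) ^ (2 * n) / (2 * n).factorial)) =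
    fun t => ((-1) ^ n * x ^ (2 * n) / (2 * n).factorial) * ((1 - t ^ 2) ^ (ν - 1 / 2) * t ^ (2 * n)) := by
    ext t; rw [mul_pow]; ring
  rw [this, intervalIntegral.integral_const_mul]
  change _ * bM (ν - 1 / 2) n = _
  rw [bM_eq ν hν n, div_pow, ← pow_mul]
  have hG : Real.Gamma ((n : ℝ) + ν + 1) ≠ 0 := (Real.Gamma_pos_of_pos (by positivity)).ne'
  field_simp

noncomputable def kk (β x s : ℝ) : ℂ :=
  ((s ^ β * Real.exp (-(x * s)) : ℝ) : ℂ) * (2 + s * Complex.I) ^ (β : ℂ)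

noncomputable def kK (β x : ℝ) : ℂ := ∫ s in Ioi (0 : ℝ), kk β x s

lemma cpow_bound (β : ℝ) (hβ : 0 < β) (s : ℝ) (hs : 0 ≤ s) :
    ‖((2 : ℂ) + s * Complex.I) ^ (β : ℂ)‖ ≤ 4 ^ β + 2 ^ β * s ^ β := by
  rw [Complex.norm_cpow_real]
  have h : ‖(2 : ℂ) + s * Complex.I‖ ≤ 2 + s := by
    refine (norm_add_le _ _).trans ?_
    simp [abs_of_nonneg hs]
  have h1 : ‖(2 : ℂ) + s * Complex.I‖ ^ β ≤ (2 + s) ^ β := by gcongr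
  refine h1.trans ?_
  rw [← Real.mul_rpow (by norm_num) hs]
  rcases le_total s 2 with h | h
  · have : (2 + s) ^ β ≤ 4 ^ β := by gcongr; linarith
    have : 0 ≤ (2 * s) ^ β := by positivity
    linarith
  · have : (2 + s) ^ β ≤ (2 * s) ^ β := by gcongr; linarith
    have : 0 ≤ (4 : ℝ) ^ β := by positivity
    linarith

lemma cont_cpow2 (β : ℝ) (hβ : 0 < β) : Continuous (fun s : ℝ => ((2 : ℂ) + s * Complex.I) ^ (β : ℂ)) := by
  rw [continuous_iff_continuousAt]
  intro s
  exact (Complex.continuousAt_cpow_const_of_re_pos (z := (2 : ℂ) + s * Complex.I) (Or.inl (by simp))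
    (by simpa using hβ)).comp (f := fun s : ℝ => (2 : ℂ) + s * Complex.I) (by fun_prop)

lemma kk_cont (β x : ℝ) (hβ : 0 < β) : Continuous (kk β x) := by
  unfold kk
  have h1 : Continuous (fun s : ℝ => s ^ β) := Real.continuous_rpow_const hβ.le
  have := cont_cpow2 β hβ
  refine Continuous.mul (Complex.continuous_ofReal.comp (by fun_prop)) this

lemma dom_integrable (β x : ℝ) (hβ : 0 < β) (hx : 0 < x) :
    MeasureTheory.IntegrableOn (fun s : ℝ => s ^ β * Real.exp (-(x * s)) * (4 ^ β + 2 ^ β * s ^ β)) (Ioi 0) := by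
  have h1 := (integrableOn_rpow_mul_exp_neg_mul_rpow (p := 1) (s := β) (by linarith) one_pos hx).const_mul (4 ^ β)
  have h2 := (integrableOn_rpow_mul_exp_neg_mul_rpow (p := 1) (s := 2 * β) (by linarith) one_pos hx).const_mul (2 ^ β)
  refine (MeasureTheory.IntegrableOn.congr_fun (MeasureTheory.Integrable.add h1 h2) ?_ measurableSet_Ioi)
  intro s hs
  have hs : 0 < s := hs
  simp only [Pi.add_apply, Real.rpow_one, two_mul, Real.rpow_add hs, neg_mul]
  ring

lemma kk_norm (β x s : ℝ) (hβ : 0 < β) (hs : 0 ≤ s) :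
    ‖kk β x s‖ ≤ s ^ β * Real.exp (-(x * s)) * (4 ^ β + 2 ^ β * s ^ β) := by
  unfold kk
  rw [norm_mul, Complex.norm_real, Real.norm_eq_abs, abs_of_nonneg (by positivity)]
  gcongr
  exact cpow_bound β hβ s hs

lemma kk_integrable (β x : ℝ) (hβ : 0 < β) (hx : 0 < x) :
    MeasureTheory.IntegrableOn (kk β x) (Ioi 0) := by
  refine MeasureTheory.Integrable.mono' (dom_integrable β x hβ hx) (kk_cont β x hβ).aestronglyMeasurable ?_
  refine (MeasureTheory.ae_restrict_iff' measurableSet_Ioi).2 (Filter.Eventually.of_forall (fun s hs => ?_))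
  exact kk_norm β x s hβ (le_of_lt hs)

noncomputable def hh (β x : ℝ) (z : ℂ) : ℂ :=
  (1 - z) ^ (β : ℂ) * (1 + z) ^ (β : ℂ) * Complex.exp (Complex.I * x * z)

lemma hh_real (β x t : ℝ) (ht : t ∈ Icc (-1 : ℝ) 1) :
    (hh β x t).re = (1 - t ^ 2) ^ β * Real.cos (x * t) := by
  unfold hh
  have h1 : 0 ≤ 1 - t := by linarith [ht.2]
  have h2 : 0 ≤ 1 + t := by linarith [ht.1]
  have e1 : (1 : ℂ) - t = ((1 - t : ℝ) : ℂ) := by push_cast; ring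
  have e2 : (1 : ℂ) + t = ((1 + t : ℝ) : ℂ) := by push_cast; ring
  have e3 : Complex.I * x * t = ((x * t : ℝ) : ℂ) * Complex.I := by push_cast; ring
  rw [e1, e2, e3, ← Complex.ofReal_cpow h1, ← Complex.ofReal_cpow h2, ← Complex.ofReal_mul,
    ← Real.mul_rpow h1 h2, Complex.re_ofReal_mul, Complex.exp_ofReal_mul_I_re]
  congr 2; ring

lemma hh_right (β x s : ℝ) (hs : 0 < s) :
    hh β x (1 + s * Complex.I) =
      Complex.exp (((x - β * π / 2 : ℝ) : ℂ) * Complex.I) * kk β x s := by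
  unfold hh kk
  have e1 : (1 : ℂ) - (1 + s * Complex.I) = (s : ℂ) * (-Complex.I) := by ring
  have e2 : (1 : ℂ) + (1 + s * Complex.I) = 2 + s * Complex.I := by ring
  have e3 : ((s : ℂ) * (-Complex.I)) ^ (β : ℂ) = ((s ^ β : ℝ) : ℂ) * Complex.exp (((- β * π / 2 : ℝ) : ℂ) * Complex.I) := by
    rw [Complex.cpow_def_of_ne_zero (by simp [hs.ne']), Complex.log_ofReal_mul hs (by simp),
      Complex.log_neg_I, Real.rpow_def_of_pos hs, Complex.ofReal_exp, ← Complex.exp_add]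
    congr 1; push_cast; ring
  rw [e1, e2, e3]
  have e4 : Complex.exp (Complex.I * x * (1 + s * Complex.I)) =
      Complex.exp ((x : ℂ) * Complex.I) * ((Real.exp (-(x * s)) : ℝ) : ℂ) := by
    rw [Complex.ofReal_exp, ← Complex.exp_add]
    congr 1; push_cast; ring_nf; simp; ring
  have e5 : Complex.exp (((x - β * π / 2 : ℝ) : ℂ) * Complex.I) =
      Complex.exp ((x : ℂ) * Complex.I) * Complex.exp (((- β * π / 2 : ℝ) : ℂ) * Complex.I) := by
    rw [← Complex.exp_add]; congr 1; push_cast; ring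
  rw [e4, e5]; push_cast; ring

lemma hh_left (β x s : ℝ) (hs : 0 < s) :
    hh β x (-1 + s * Complex.I) = (starRingEnd ℂ) (hh β x (1 + s * Complex.I)) := by
  unfold hh
  have c1 : (1 : ℂ) - (-1 + s * Complex.I) = (starRingEnd ℂ) (1 + (1 + s * Complex.I)) := by
    simp; ring
  have c2 : (1 : ℂ) + (-1 + s * Complex.I) = (starRingEnd ℂ) (1 - (1 + s * Complex.I)) := by
    simp
  have a1 : (1 + (1 + s * Complex.I) : ℂ).arg ≠ π := by
    intro h
    have := (Complex.arg_eq_pi_iff.1 h).2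
    simp at this; exact hs.ne' this
  have a2 : (1 - (1 + s * Complex.I) : ℂ).arg ≠ π := by
    intro h
    have := (Complex.arg_eq_pi_iff.1 h).2
    simp at this; exact hs.ne' this
  rw [c1, c2, Complex.conj_cpow _ _ a1, Complex.conj_cpow _ _ a2, Complex.conj_ofReal, map_mul, map_mul,
    ← Complex.exp_conj]
  rw [mul_comm ((starRingEnd ℂ) ((1 + (1 + s * Complex.I) : ℂ) ^ (β : ℂ)))]
  congr 2
  simp; ring

lemma hh_contAt (β x : ℝ) (hβ : 0 < β) (z : ℂ) (h1 : -1 ≤ z.re) (h2 : z.re ≤ 1) :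
    ContinuousAt (hh β x) z := by
  unfold hh
  refine ContinuousAt.mul (ContinuousAt.mul ?_ ?_) (by fun_prop)
  · exact (Complex.continuousAt_cpow_const_of_re_pos (z := 1 - z) (Or.inl (by simpa using h2))
      (by simpa using hβ)).comp (f := fun z : ℂ => 1 - z) (by fun_prop)
  · exact (Complex.continuousAt_cpow_const_of_re_pos (z := 1 + z) (Or.inl (by simp; linarith))
      (by simpa using hβ)).comp (f := fun z : ℂ => 1 + z) (by fun_prop)

lemma hh_diffAt (β x : ℝ) (z : ℂ) (h1 : -1 < z.re) (h2 : z.re < 1) :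
    DifferentiableAt ℂ (hh β x) z := by
  unfold hh
  have s1 : 1 - z ∈ Complex.slitPlane := Or.inl (by simpa using h2)
  have s2 : 1 + z ∈ Complex.slitPlane := Or.inl (by simp; linarith)
  refine DifferentiableAt.mul (DifferentiableAt.mul ?_ ?_) (by fun_prop)
  · exact DifferentiableAt.cpow (by fun_prop) (by fun_prop) s1
  · exact DifferentiableAt.cpow (by fun_prop) (by fun_prop) s2

lemma hh_top (β x R t : ℝ) (hβ : 0 < β) (hR : 0 < R) (ht : t ∈ Icc (-1 : ℝ) 1) :
    ‖hh β x (t + R * Complex.I)‖ ≤ (R + 2) ^ β * (R + 2) ^ β * Real.exp (-(x * R)) := by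
  unfold hh
  have ht' : |t| ≤ 1 := abs_le.2 ht
  have n1 : ‖(1 : ℂ) - (t + R * Complex.I)‖ ≤ R + 2 := by
    refine (norm_sub_le _ _).trans ?_
    have := norm_add_le (t : ℂ) (R * Complex.I)
    simp [abs_of_pos hR] at this ⊢
    linarith
  have n2 : ‖(1 : ℂ) + (t + R * Complex.I)‖ ≤ R + 2 := by
    refine (norm_add_le _ _).trans ?_
    have := norm_add_le (t : ℂ) (R * Complex.I)
    simp [abs_of_pos hR] at this ⊢
    linarith
  rw [norm_mul, norm_mul, Complex.norm_cpow_real, Complex.norm_cpow_real, Complex.norm_exp]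
  have : (Complex.I * x * (t + R * Complex.I)).re = -(x * R) := by simp
  rw [this]
  gcongr

lemma contour_R (β x R : ℝ) (hβ : 0 < β) (hR : 0 < R) :
    (∫ t in (-1 : ℝ)..1, hh β x t) - (∫ t in (-1 : ℝ)..1, hh β x (t + R * Complex.I)) =
      ((2 * (Complex.exp (((x - β * π / 2 : ℝ) : ℂ) * Complex.I) * ∫ s in (0 : ℝ)..R, kk β x s).im : ℝ) : ℂ) := by
  have h := Complex.integral_boundary_rect_eq_zero_of_continuousOn_of_differentiableOn (hh β x)
    (-1 : ℂ) (1 + R * Complex.I) (fun z hz => by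
      obtain ⟨hz, -⟩ := hz
      simp at hz
      exact (hh_contAt β x hβ z hz.1 hz.2).continuousWithinAt)
    (fun z hz => by
      obtain ⟨hz, -⟩ := hz
      simp at hz
      exact (hh_diffAt β x z hz.1 hz.2).differentiableWithinAt)
  simp only [Complex.neg_re, Complex.one_re, Complex.neg_im, Complex.one_im, neg_zero, Complex.add_re,
    Complex.mul_re, Complex.ofReal_re, Complex.I_re, mul_zero, Complex.ofReal_im, Complex.I_im, mul_one,
    sub_self, add_zero, Complex.add_im, Complex.mul_im, zero_add, Complex.ofReal_zero, zero_mul,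
    Complex.ofReal_neg, Complex.ofReal_one, smul_eq_mul] at h
  set u := Complex.exp (((x - β * π / 2 : ℝ) : ℂ) * Complex.I)
  have i1 : (∫ y in (0 : ℝ)..R, hh β x (1 + y * Complex.I)) = u * ∫ s in (0 : ℝ)..R, kk β x s := by
    rw [← intervalIntegral.integral_const_mul]
    refine intervalIntegral.integral_congr_ae (Filter.Eventually.of_forall (fun s hs => ?_))
    rw [uIoc_of_le hR.le] at hs
    exact hh_right β x s hs.1
  have i2 : (∫ y in (0 : ℝ)..R, hh β x (-1 + y * Complex.I)) =
      (starRingEnd ℂ) (u * ∫ s in (0 : ℝ)..R, kk β x s) := by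
    rw [← i1]
    rw [intervalIntegral.integral_of_le hR.le, intervalIntegral.integral_of_le hR.le, ← integral_conj]
    refine MeasureTheory.setIntegral_congr_fun measurableSet_Ioc (fun s hs => ?_)
    exact hh_left β x s hs.1
  rw [i1, i2] at h
  set w := u * ∫ s in (0 : ℝ)..R, kk β x s
  have hw : w - (starRingEnd ℂ) w = ((2 * w.im : ℝ) : ℂ) * Complex.I := Complex.sub_conj w
  have : (∫ t in (-1 : ℝ)..1, hh β x t) - (∫ t in (-1 : ℝ)..1, hh β x (t + R * Complex.I)) =
      - Complex.I * (w - (starRingEnd ℂ) w) := by linear_combination h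
  rw [this, hw]
  linear_combination -((2 * w.im : ℝ) : ℂ) * Complex.I_mul_I

lemma contour (β x : ℝ) (hβ : 0 < β) (hx : 0 < x) :
    pP β x = 2 * (Complex.exp (((x - β * π / 2 : ℝ) : ℂ) * Complex.I) * kK β x).im := by
  have hre : (∫ t in (-1 : ℝ)..1, hh β x t).re = pP β x := by
    unfold pP
    have hi : IntervalIntegrable (fun t : ℝ => hh β x t) MeasureTheory.volume (-1) 1 := by
      refine ContinuousOn.intervalIntegrable (fun t ht => ?_)
      rw [uIcc_of_le (by norm_num)] at ht
      exact ((hh_contAt β x hβ t (by simpa using ht.1) (by simpa using ht.2)).comp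
        (f := fun t : ℝ => (t : ℂ)) (by fun_prop)).continuousWithinAt
    have := Complex.reCLM.intervalIntegral_comp_comm hi
    simp only [Complex.reCLM_apply] at this
    rw [← this]
    refine intervalIntegral.integral_congr (fun t ht => ?_)
    rw [uIcc_of_le (by norm_num)] at ht
    exact hh_real β x t ht
  have htop : Filter.Tendsto (fun R : ℝ => ∫ t in (-1 : ℝ)..1, hh β x (t + R * Complex.I)) Filter.atTop (nhds 0) := by
    have h0 : Filter.Tendsto (fun R : ℝ => 2 * Real.exp (2 * x) * ((R + 2) ^ (2 * β) * Real.exp (-x * (R + 2)))) Filter.atTop (nhds 0) := by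
      have := (tendsto_rpow_mul_exp_neg_mul_atTop_nhds_zero (2 * β) x hx).comp
        (Filter.tendsto_atTop_add_const_right Filter.atTop (2 : ℝ) Filter.tendsto_id)
      simpa using this.const_mul (2 * Real.exp (2 * x))
    refine squeeze_zero_norm' ?_ h0
    filter_upwards [Filter.eventually_gt_atTop 0] with R hR
    have := intervalIntegral.norm_integral_le_of_norm_le_const (a := -1) (b := 1)
      (f := fun t : ℝ => hh β x (t + R * Complex.I))
      (C := (R + 2) ^ β * (R + 2) ^ β * Real.exp (-(x * R))) (fun t ht => by
        rw [uIoc_of_le (by norm_num)] at ht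
        exact hh_top β x R t hβ hR ⟨ht.1.le, ht.2⟩)
    refine this.trans (le_of_eq ?_)
    rw [two_mul β, Real.rpow_add (by linarith)]
    have : Real.exp (-(x * R)) = Real.exp (2 * x) * Real.exp (-x * (R + 2)) := by
      rw [← Real.exp_add]; congr 1; ring
    rw [this]; norm_num; ring
  have hk := MeasureTheory.intervalIntegral_tendsto_integral_Ioi 0 (kk_integrable β x hβ hx) Filter.tendsto_id
  set u := Complex.exp (((x - β * π / 2 : ℝ) : ℂ) * Complex.I)
  have l1 : Filter.Tendsto (fun R : ℝ => ((∫ t in (-1 : ℝ)..1, hh β x t) - (∫ t in (-1 : ℝ)..1, hh β x (t + R * Complex.I))).re)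
      Filter.atTop (nhds (pP β x)) := by
    have := (Complex.continuous_re.tendsto _).comp (htop.const_sub (∫ t in (-1 : ℝ)..1, hh β x t))
    rw [sub_zero, hre] at this
    exact this
  have l2 : Filter.Tendsto (fun R : ℝ => 2 * (u * ∫ s in (0 : ℝ)..R, kk β x s).im) Filter.atTop
      (nhds (2 * (u * kK β x).im)) :=
    ((Complex.continuous_im.tendsto _).comp (hk.const_mul u)).const_mul 2
  refine tendsto_nhds_unique (l1.congr' ?_) l2
  filter_upwards [Filter.eventually_gt_atTop 0] with R hR
  rw [contour_R β x R hβ hR, Complex.ofReal_re]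

lemma kK_scale (β x : ℝ) (hx : 0 < x) :
    ((x ^ (β + 1) : ℝ) : ℂ) * kK β x =
      ∫ u in Ioi (0 : ℝ), ((u ^ β * Real.exp (-(1 * u)) : ℝ) : ℂ) * (2 + ((u / x : ℝ) : ℂ) * Complex.I) ^ (β : ℂ) := by
  have h := MeasureTheory.integral_comp_mul_left_Ioi (fun s => kk β x s) 0 (inv_pos.2 hx)
  rw [mul_zero, inv_inv] at h
  change _ = x • kK β x at h
  have e : ((x ^ (β + 1) : ℝ) : ℂ) * kK β x = ((x ^ β : ℝ) : ℂ) * (x • kK β x) := by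
    rw [Real.rpow_add_one hx.ne', Complex.real_smul]; push_cast; ring
  rw [e, ← h, ← MeasureTheory.integral_const_mul]
  refine MeasureTheory.setIntegral_congr_fun measurableSet_Ioi (fun u hu => ?_)
  have hu : 0 < u := hu
  simp only [kk]
  rw [show x⁻¹ * u = u / x by ring, ← mul_assoc, ← Complex.ofReal_mul, Real.div_rpow hu.le hx.le]
  have : x * (u / x) = 1 * u := by field_simp
  rw [this]
  congr 2
  have : x ^ β ≠ 0 := (Real.rpow_pos_of_pos hx _).ne'
  field_simp

lemma kK_lim (β : ℝ) (hβ : 0 < β) : ∃ g : ℝ, 0 < g ∧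
    Filter.Tendsto (fun x : ℝ => ((x ^ (β + 1) : ℝ) : ℂ) * kK β x) Filter.atTop (nhds (g : ℂ)) := by
  refine ⟨Real.Gamma (β + 1) * 2 ^ β, mul_pos (Real.Gamma_pos_of_pos (by positivity)) (by positivity), ?_⟩
  have hG : ((Real.Gamma (β + 1) * 2 ^ β : ℝ) : ℂ) =
      ∫ u in Ioi (0 : ℝ), ((u ^ β * Real.exp (-(1 * u)) : ℝ) : ℂ) * (2 : ℂ) ^ (β : ℂ) := by
    rw [MeasureTheory.integral_mul_const, integral_complex_ofReal, Real.Gamma_eq_integral (by positivity)]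
    rw [Complex.ofReal_mul, Complex.ofReal_cpow (by norm_num)]
    simp only [add_sub_cancel_right, mul_comm, mul_one, Complex.ofReal_ofNat]
  rw [hG]
  have h : Filter.Tendsto (fun x : ℝ => ∫ u in Ioi (0 : ℝ), ((u ^ β * Real.exp (-(1 * u)) : ℝ) : ℂ) * (2 + ((u / x : ℝ) : ℂ) * Complex.I) ^ (β : ℂ))
      Filter.atTop (nhds (∫ u in Ioi (0 : ℝ), ((u ^ β * Real.exp (-(1 * u)) : ℝ) : ℂ) * (2 : ℂ) ^ (β : ℂ))) := by
    refine MeasureTheory.tendsto_integral_filter_of_dominated_convergence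
      (fun u => u ^ β * Real.exp (-(1 * u)) * (4 ^ β + 2 ^ β * u ^ β)) ?_ ?_
      (dom_integrable β 1 hβ one_pos) ?_
    · refine Filter.Eventually.of_forall (fun x => Continuous.aestronglyMeasurable ?_)
      have h1 : Continuous (fun s : ℝ => s ^ β) := Real.continuous_rpow_const hβ.le
      exact (Complex.continuous_ofReal.comp (by fun_prop)).mul
        ((cont_cpow2 β hβ).comp (by fun_prop : Continuous (fun u : ℝ => u / x)))
    · filter_upwards [Filter.eventually_ge_atTop 1] with x hx
      refine (MeasureTheory.ae_restrict_iff' measurableSet_Ioi).2 (Filter.Eventually.of_forall (fun u hu => ?_))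
      have hu : 0 < u := hu
      rw [norm_mul, Complex.norm_real, Real.norm_eq_abs, abs_of_nonneg (by positivity)]
      have h1 := cpow_bound β hβ (u / x) (by positivity)
      have h2 : (u / x) ^ β ≤ u ^ β := by
        gcongr
        exact div_le_self hu.le hx
      have h3 : 4 ^ β + 2 ^ β * (u / x) ^ β ≤ 4 ^ β + 2 ^ β * u ^ β := by gcongr
      gcongr
      exact h1.trans h3
    · refine Filter.Eventually.of_forall (fun u => ?_)
      refine Filter.Tendsto.const_mul _ ?_
      have h1 : Filter.Tendsto (fun x : ℝ => u / x) Filter.atTop (nhds 0) :=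
        Filter.Tendsto.div_atTop tendsto_const_nhds Filter.tendsto_id
      have h2 := ((cont_cpow2 β hβ).tendsto 0).comp h1
      simpa [Function.comp_def] using h2
  refine h.congr' ?_
  filter_upwards [Filter.eventually_gt_atTop 0] with x hx
  rw [kK_scale β x hx]

def AS (ν : ℝ) : Prop := ∃ c : ℝ, c ≠ 0 ∧
  Filter.Tendsto (fun x : ℝ => x ^ (ν + 1 / 2) * bE ν (x ^ 2 / 4) - c * Real.sin (x - (ν - 1 / 2) * π / 2))
    Filter.atTop (nhds 0)

lemma bE_form (ν : ℝ) (hν : 1 / 2 < ν) : ∃ d : ℝ, 0 < d ∧ ∀ x : ℝ, 0 < x →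
    bE ν (x ^ 2 / 4) = d * (Complex.exp (((x - (ν - 1 / 2) * π / 2 : ℝ) : ℂ) * Complex.I) * kK (ν - 1 / 2) x).im := by
  have hD : 0 < bM (ν - 1 / 2) 0 * Real.Gamma (ν + 1) :=
    mul_pos (bM_zero_pos _ (by linarith)) (Real.Gamma_pos_of_pos (by linarith))
  refine ⟨2 / (bM (ν - 1 / 2) 0 * Real.Gamma (ν + 1)), by positivity, fun x hx => ?_⟩
  have h1 := poisson ν hν x
  rw [contour _ x (by linarith) hx] at h1
  rw [div_mul_eq_mul_div, h1, mul_div_cancel_left₀ _ hD.ne']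

lemma AS_main (ν : ℝ) (hν : 1 / 2 < ν) : AS ν := by
  obtain ⟨d, hd, hE⟩ := bE_form ν hν
  obtain ⟨g, hg, hl⟩ := kK_lim (ν - 1 / 2) (by linarith)
  refine ⟨d * g, by positivity, ?_⟩
  have h0 : Filter.Tendsto (fun x : ℝ => d * ‖((x ^ (ν - 1 / 2 + 1) : ℝ) : ℂ) * kK (ν - 1 / 2) x - g‖) Filter.atTop (nhds 0) := by
    have := ((hl.sub_const (g : ℂ)).norm).const_mul d
    simpa using this
  refine squeeze_zero_norm' ?_ h0
  filter_upwards [Filter.eventually_gt_atTop 0] with x hx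
  rw [hE x hx]
  set u := Complex.exp (((x - (ν - 1 / 2) * π / 2 : ℝ) : ℂ) * Complex.I) with hu
  have hun : ‖u‖ = 1 := Complex.norm_exp_ofReal_mul_I _
  have hui : u.im = Real.sin (x - (ν - 1 / 2) * π / 2) := Complex.exp_ofReal_mul_I_im _
  have e : x ^ (ν + 1 / 2) * (d * (u * kK (ν - 1 / 2) x).im) - d * g * Real.sin (x - (ν - 1 / 2) * π / 2) =
      d * (u * (((x ^ (ν - 1 / 2 + 1) : ℝ) : ℂ) * kK (ν - 1 / 2) x - g)).im := by
    have : u * (((x ^ (ν - 1 / 2 + 1) : ℝ) : ℂ) * kK (ν - 1 / 2) x - g) =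
      ((x ^ (ν - 1 / 2 + 1) : ℝ) : ℂ) * (u * kK (ν - 1 / 2) x) - (g : ℂ) * u := by ring
    rw [this, Complex.sub_im, Complex.im_ofReal_mul, Complex.im_ofReal_mul, hui,
      show ν - 1 / 2 + 1 = ν + 1 / 2 by ring]
    ring
  rw [e, norm_mul, Real.norm_eq_abs, abs_of_pos hd]
  gcongr
  refine (Complex.abs_im_le_norm _).trans ?_
  rw [norm_mul, hun, one_mul]

lemma AS_all (ν : ℝ) (hν : 0 < ν) : AS ν := by
  rcases lt_or_ge (1 / 2) ν with h | h
  · exact AS_main ν h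
  obtain ⟨c1, -, h1⟩ := AS_main (ν + 1) (by linarith)
  obtain ⟨c2, hc2, h2⟩ := AS_main (ν + 2) (by linarith)
  refine ⟨c2 / 4, by positivity, ?_⟩
  have hinv : Filter.Tendsto (fun x : ℝ => x⁻¹) Filter.atTop (nhds 0) := tendsto_inv_atTop_zero
  have hs : Filter.Tendsto (fun x : ℝ => x⁻¹ * Real.sin (x - (ν + 1 - 1 / 2) * π / 2)) Filter.atTop (nhds 0) := by
    refine squeeze_zero_norm' ?_ hinv
    filter_upwards [Filter.eventually_gt_atTop 0] with x hx
    rw [norm_mul, norm_inv, Real.norm_eq_abs, Real.norm_eq_abs, abs_of_pos hx]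
    have := Real.abs_sin_le_one (x - (ν + 1 - 1 / 2) * π / 2)
    have : 0 < x⁻¹ := by positivity
    nlinarith
  have t1 := (hinv.mul h1).const_mul (ν + 1)
  have t2 := hs.const_mul ((ν + 1) * c1)
  have t3 := h2.const_mul (-1 / 4)
  have t := (t1.add t2).add t3
  simp only [mul_zero, add_zero] at t
  refine t.congr' ?_
  filter_upwards [Filter.eventually_gt_atTop 0] with x hx
  rw [bE_rec ν hν]
  have e1 : x ^ (ν + 1 + 1 / 2) = x ^ (ν + 1 / 2) * x := by
    rw [← Real.rpow_add_one hx.ne']; congr 1; ring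
  have e2 : x ^ (ν + 2 + 1 / 2) = x ^ (ν + 1 / 2) * x ^ 2 := by
    rw [← Real.rpow_add_natCast hx.ne']; congr 1; push_cast; ring
  have e3 : Real.sin (x - (ν + 2 - 1 / 2) * π / 2) = - Real.sin (x - (ν - 1 / 2) * π / 2) := by
    rw [← Real.sin_sub_pi]; congr 1; ring
  rw [e1, e2, e3]
  field_simp
  ring

lemma im_kk (β x s : ℝ) (m : ℕ) (hβ : 0 < β) (hβ1 : β ≤ 1) (hs : 0 < s) (hx : x = (m + 1 / 2) * π) :
    0 < (-1) ^ m * (Complex.exp (((x - β * π / 2 : ℝ) : ℂ) * Complex.I) * kk β x s).im := by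
  unfold kk
  set w : ℂ := 2 + s * Complex.I with hw
  have hre : w.re = 2 := by simp [hw]
  have him : w.im = s := by simp [hw]
  have hw0 : w ≠ 0 := by intro h; rw [h] at hre; simp at hre
  have ha1 : w.arg < π / 2 := (abs_lt.1 (Complex.abs_arg_lt_pi_div_two_iff.2 (Or.inl (by rw [hre]; norm_num)))).2
  have ha0 : 0 < w.arg := by
    refine lt_of_le_of_ne (Complex.arg_nonneg_iff.2 (by rw [him]; exact hs.le)) (fun h => ?_)
    have := (Complex.arg_eq_zero_iff.1 h.symm).2
    rw [him] at this; exact hs.ne' this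
  have e : Complex.exp (((x - β * π / 2 : ℝ) : ℂ) * Complex.I) *
      (((s ^ β * Real.exp (-(x * s)) : ℝ) : ℂ) * w ^ (β : ℂ)) =
      ((s ^ β * Real.exp (-(x * s)) * Real.exp (Real.log ‖w‖ * β) : ℝ) : ℂ) *
        Complex.exp ((((π / 2 - β * π / 2 + β * w.arg) + m * π : ℝ) : ℂ) * Complex.I) := by
    rw [Complex.cpow_def_of_ne_zero hw0, Complex.ofReal_mul _ (Real.exp (Real.log ‖w‖ * β)), Complex.ofReal_exp (Real.log ‖w‖ * β)]
    rw [mul_left_comm, mul_assoc, ← Complex.exp_add, ← Complex.exp_add, hx, Complex.log]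
    congr 2
    push_cast; ring
  rw [e, Complex.im_ofReal_mul, Complex.exp_ofReal_mul_I_im, Real.sin_add_nat_mul_pi]
  have hp := Real.pi_pos
  have hsin : 0 < Real.sin (π / 2 - β * π / 2 + β * w.arg) := by
    apply Real.sin_pos_of_pos_of_lt_pi
    · have : 0 < β * w.arg := by positivity
      nlinarith
    · nlinarith
  have h1 : ((-1 : ℝ) ^ m) * (-1) ^ m = 1 := by rw [← mul_pow]; simp
  have : 0 < s ^ β * Real.exp (-(x * s)) * Real.exp (Real.log ‖w‖ * β) := by positivity
  calc (0 : ℝ) < s ^ β * Real.exp (-(x * s)) * Real.exp (Real.log ‖w‖ * β) * Real.sin (π / 2 - β * π / 2 + β * w.arg) := by positivity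
    _ = (((-1 : ℝ) ^ m) * (-1) ^ m) * (s ^ β * Real.exp (-(x * s)) * Real.exp (Real.log ‖w‖ * β) * Real.sin (π / 2 - β * π / 2 + β * w.arg)) := by rw [h1, one_mul]
    _ = _ := by ring

lemma sign_kK (β x : ℝ) (m : ℕ) (hβ : 0 < β) (hβ1 : β ≤ 1) (hx : x = (m + 1 / 2) * π) :
    0 < (-1) ^ m * (Complex.exp (((x - β * π / 2 : ℝ) : ℂ) * Complex.I) * kK β x).im := by
  have hx0 : 0 < x := by rw [hx]; positivity
  have hi := (kk_integrable β x hβ hx0)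
  set u := Complex.exp (((x - β * π / 2 : ℝ) : ℂ) * Complex.I) with hu
  have hi2 : MeasureTheory.IntegrableOn (fun s => u * kk β x s) (Ioi 0) := hi.const_mul u
  have e : (-1) ^ m * (u * kK β x).im = ∫ s in Ioi (0 : ℝ), (-1) ^ m * (u * kk β x s).im := by
    rw [MeasureTheory.integral_const_mul, kK, ← MeasureTheory.integral_const_mul]
    congr 1
    exact (Complex.imCLM.integral_comp_comm hi2).symm
  have hi3 : MeasureTheory.IntegrableOn (fun s => (-1) ^ m * (u * kk β x s).im) (Ioi 0) :=
    (Complex.imCLM.integrable_comp hi2).const_mul _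
  rw [e, MeasureTheory.setIntegral_pos_iff_support_of_nonneg_ae _ hi3]
  · have : Function.support (fun s => (-1) ^ m * (u * kk β x s).im) ∩ Ioi 0 = Ioi 0 := by
      refine inter_eq_right.2 (fun s hs => ?_)
      exact (im_kk β x s m hβ hβ1 hs hx).ne'
    rw [this]; simp
  · refine (MeasureTheory.ae_restrict_iff' measurableSet_Ioi).2 (Filter.Eventually.of_forall (fun s hs => ?_))
    exact (im_kk β x s m hβ hβ1 hs hx).le

def PZ (ν : ℝ) : Prop := ∃ z : ℕ → ℝ, StrictMono z ∧ (∀ n, 0 < z n ∧ bE ν ((z n) ^ 2 / 4) = 0) ∧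
  ∀ δ : ℝ, 0 < δ → ∀ᶠ n : ℕ in Filter.atTop, z n < (n + 1) * π + (ν - 1 / 2) * π / 2 + δ

lemma PZ_upgrade (ν : ℝ) (hν : 0 < ν) (z : ℕ → ℝ) (hz : StrictMono z)
    (h0 : ∀ n, 0 < z n ∧ bE ν ((z n) ^ 2 / 4) = 0)
    (hb : ∀ᶠ n : ℕ in Filter.atTop, z n < (n + 1) * π + (ν - 1 / 2) * π / 2 + 3 * π / 4) : PZ ν := by
  refine ⟨z, hz, h0, fun δ hδ => ?_⟩
  obtain ⟨c, hc, hl⟩ := AS_all ν hν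
  have hp := Real.pi_pos
  set d := min δ (π / 4) with hd
  have hd0 : 0 < d := lt_min hδ (by positivity)
  have hd1 : d ≤ δ := min_le_left _ _
  have hd2 : d ≤ π / 4 := min_le_right _ _
  have hs : 0 < Real.sin d := Real.sin_pos_of_pos_of_lt_pi hd0 (by linarith)
  have hcs : 0 < |c| * Real.sin d := mul_pos (abs_pos.2 hc) hs
  have hev := (Metric.tendsto_nhds.1 hl) _ hcs
  obtain ⟨M, hM⟩ := Filter.eventually_atTop.1 hev
  obtain ⟨N, hN⟩ := exists_nat_gt (M + |(ν - 1 / 2) * π / 2|)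
  filter_upwards [hb, Filter.eventually_ge_atTop N] with n hn hnN
  by_contra hcon
  push Not at hcon
  have hnN' : (N : ℝ) ≤ n := by exact_mod_cast hnN
  have hnM : M ≤ z n := by
    have := neg_abs_le ((ν - 1 / 2) * π / 2)
    have h3 := Real.pi_gt_three
    have : (n : ℝ) ≤ (n + 1) * π := by nlinarith [(Nat.cast_nonneg n : (0 : ℝ) ≤ n)]
    linarith
  have h := hM _ hnM
  rw [(h0 n).2, mul_zero, zero_sub, dist_zero_right, norm_neg, norm_mul, Real.norm_eq_abs, Real.norm_eq_abs] at h
  have h2 : |Real.sin (z n - (ν - 1 / 2) * π / 2)| < Real.sin d := lt_of_mul_lt_mul_left h (abs_nonneg c)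
  set y := z n - (ν - 1 / 2) * π / 2 - (n + 1) * π with hy
  have e : z n - (ν - 1 / 2) * π / 2 = y + ((n + 1 : ℕ) : ℝ) * π := by rw [hy]; push_cast; ring
  rw [e, Real.sin_add_nat_mul_pi, abs_mul, abs_pow, abs_neg, abs_one, one_pow, one_mul] at h2
  have h3 := (abs_lt.1 h2).2
  have y1 : d ≤ y := by rw [hy]; linarith
  have y2 : y < 3 * π / 4 := by rw [hy]; linarith
  rcases le_total y (π / 2) with h4 | h4
  · have := Real.sin_le_sin_of_le_of_le_pi_div_two (by linarith) h4 y1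
    linarith
  · have := Real.sin_le_sin_of_le_of_le_pi_div_two (x := d) (y := π - y) (by linarith) (by linarith) (by linarith)
    rw [Real.sin_pi_sub] at this
    linarith

lemma PZ_up (ν : ℝ) (hν : 0 < ν) (h : PZ ν) : PZ (ν + 1) := by
  obtain ⟨z, hz, h0, hb⟩ := h
  have hex : ∀ n, ∃ c ∈ Ioo (z n) (z (n + 1)), bE (ν + 1) (c ^ 2 / 4) = 0 := fun n =>
    rolle_up ν hν _ _ (h0 n).1 (hz (Nat.lt_succ_self n)) (h0 n).2 (h0 (n + 1)).2
  choose w hw hw0 using hex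
  have hp := Real.pi_pos
  refine PZ_upgrade (ν + 1) (by linarith) w
    (strictMono_nat_of_lt_succ (fun n => (hw n).2.trans (hw (n + 1)).1))
    (fun n => ⟨(h0 n).1.trans (hw n).1, hw0 n⟩) ?_
  have := (Filter.tendsto_add_atTop_nat 1).eventually (hb (π / 4) (by positivity))
  filter_upwards [this] with n hn
  refine (hw n).2.trans (hn.trans_le (le_of_eq ?_))
  push_cast; ring

lemma PZ_down (ν : ℝ) (hν : 0 < ν) (h : PZ (ν + 1)) : PZ ν := by
  obtain ⟨z, hz, h0, hb⟩ := h
  obtain ⟨w0, hw00, hw0z⟩ := rolle_down ν hν 0 (z 0) le_rfl (h0 0).1 (Or.inl rfl) (h0 0).2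
  have hex : ∀ n, ∃ c ∈ Ioo (z n) (z (n + 1)), bE ν (c ^ 2 / 4) = 0 := fun n =>
    rolle_down ν hν _ _ (h0 n).1.le (hz (Nat.lt_succ_self n)) (Or.inr (h0 n).2) (h0 (n + 1)).2
  choose w hw hwz using hex
  have hp := Real.pi_pos
  let v : ℕ → ℝ := fun n => match n with
    | 0 => w0
    | k + 1 => w k
  have hvz : ∀ n, v n < z n := by
    intro n
    cases n with
    | zero => exact hw00.2
    | succ k => exact (hw k).2
  have hzv : ∀ n, z n < v (n + 1) := fun n => (hw n).1
  refine PZ_upgrade ν hν v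
    (strictMono_nat_of_lt_succ (fun n => (hvz n).trans (hzv n))) ?_ ?_
  · intro n
    cases n with
    | zero => exact ⟨hw00.1, hw0z⟩
    | succ k => exact ⟨(h0 k).1.trans (hw k).1, hwz k⟩
  filter_upwards [hb (π / 4) (by positivity)] with n hn
  refine (hvz n).trans (hn.trans_le (le_of_eq ?_))
  ring

lemma PZ_base (ν : ℝ) (h1 : 1 / 2 < ν) (h2 : ν ≤ 3 / 2) : PZ ν := by
  obtain ⟨d, hd, hE⟩ := bE_form ν h1
  have hp := Real.pi_pos
  let f : ℝ → ℝ := fun x => bE ν (x ^ 2 / 4)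
  have hf : Continuous f := by
    have : Continuous (bE ν) := continuous_iff_continuousAt.2
      (fun y => (bE_hasDeriv ν (by linarith) y).continuousAt)
    exact this.comp (by fun_prop)
  have hsign : ∀ m : ℕ, 0 < (-1) ^ m * f ((m + 1 / 2) * π) := by
    intro m
    have := sign_kK (ν - 1 / 2) ((m + 1 / 2) * π) m (by linarith) (by linarith) rfl
    simp only [f]
    rw [hE _ (by positivity)]
    have := mul_pos hd this
    linarith
  have hex : ∀ m : ℕ, ∃ c ∈ Ioo (((m : ℝ) + 1 / 2) * π) (((m + 1 : ℕ) + 1 / 2 : ℝ) * π), f c = 0 := by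
    intro m
    have hlt : ((m : ℝ) + 1 / 2) * π < ((m + 1 : ℕ) + 1 / 2 : ℝ) * π := by push_cast; nlinarith
    have hcont : ContinuousOn (fun x => (-1) ^ m * f x) (Icc (((m : ℝ) + 1 / 2) * π) (((m + 1 : ℕ) + 1 / 2 : ℝ) * π)) :=
      (continuous_const.mul hf).continuousOn
    have hs2 := hsign (m + 1)
    rw [pow_succ] at hs2
    obtain ⟨c, hc, h⟩ := intermediate_value_Ioo' hlt.le hcont ⟨by linarith, hsign m⟩
    refine ⟨c, hc, ?_⟩
    simpa using h
  choose z hz hz0 using hex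
  refine PZ_upgrade ν (by linarith) z
    (strictMono_nat_of_lt_succ (fun n => (hz n).2.trans (hz (n + 1)).1))
    (fun n => ⟨lt_trans (by positivity) (hz n).1, hz0 n⟩) ?_
  refine Filter.Eventually.of_forall (fun n => (hz n).2.trans ?_)
  push_cast
  nlinarith

lemma PZ_gt (n : ℕ) : ∀ ν : ℝ, 1 / 2 < ν → ν ≤ n + 3 / 2 → PZ ν := by
  induction n with
  | zero => intro ν h1 h2; exact PZ_base ν h1 (by simpa using h2)
  | succ n ih =>
    intro ν h1 h2
    rcases le_or_gt ν (3 / 2) with h | h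
    · exact PZ_base ν h1 h
    · have := PZ_up (ν - 1) (by linarith) (ih (ν - 1) (by linarith) (by push_cast at h2; linarith))
      simpa using this

lemma PZ_all (ν : ℝ) (hν : 0 < ν) : PZ ν := by
  have hgt : ∀ μ : ℝ, 1 / 2 < μ → PZ μ := by
    intro μ hμ
    obtain ⟨n, hn⟩ := exists_nat_gt μ
    exact PZ_gt n μ hμ (by linarith)
  rcases lt_or_ge (1 / 2) ν with h | h
  · exact hgt ν h
  · exact PZ_down ν hν (hgt (ν + 1) (by linarith))

theorem stmt_11 (ν ε : ℝ) (hν : 0 < ν) (hε : 0 < ε) :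
    ∃ k₀ : ℕ, ∀ k : ℕ, k₀ ≤ k → ∀ φ : ℝ, φ ∈ Set.Ioc 0 (Real.pi / 2) →
      0 < Real.cos φ - (Real.pi / 2 - φ) * Real.sin φ →
      Real.sin φ / (Real.cos φ - (Real.pi / 2 - φ) * Real.sin φ) = ν / (k * Real.pi) →
      ∀ j : ℝ, IsKthBesselZero ν k j →
        j < ν / Real.sin φ - (1 - ε) * Real.pi / 4 := by
  obtain ⟨z, hz, h0, hb⟩ := PZ_all ν hν
  have hp := Real.pi_pos
  obtain ⟨N, hN⟩ := Filter.eventually_atTop.1 (hb (ε * π / 8) (by positivity))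
  obtain ⟨K, hK⟩ := exists_nat_gt (4 * ν ^ 2 / (ε * π))
  refine ⟨max (N + 1) (K + 1), fun k hk φ hφ hpos heq j hj => ?_⟩
  have hkN : N + 1 ≤ k := (le_max_left _ _).trans hk
  have hkK : K + 1 ≤ k := (le_max_right _ _).trans hk
  obtain ⟨n, rfl⟩ : ∃ n, k = n + 1 := ⟨k - 1, by omega⟩
  have hjz : j ≤ z n := by
    by_contra hcon
    push Not at hcon
    obtain ⟨-, -, hcard⟩ := hj
    have hsub : z '' (Finset.range (n + 1) : Set ℕ) ⊆ {t : ℝ | t ∈ Set.Ioo 0 j ∧ besselJ ν t = 0} := by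
      rintro _ ⟨i, hi, rfl⟩
      have hi' : i ≤ n := by simpa [Nat.lt_succ_iff] using hi
      refine ⟨⟨(h0 i).1, (hz.monotone hi').trans_lt hcon⟩, ?_⟩
      exact (besselJ_zero_iff ν _ (h0 i).1).2 (h0 i).2
    have := Set.encard_le_encard hsub
    rw [hz.injective.encard_image, Set.encard_coe_eq_coe_finsetCard, Finset.card_range, hcard] at this
    have := (Nat.cast_le (α := ℕ∞)).1 this
    omega
  have hzn := hN n (by omega)
  have hsin : 0 < Real.sin φ := Real.sin_pos_of_pos_of_lt_pi hφ.1 (by linarith [hφ.2])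
  have hk0 : (0 : ℝ) < ((n + 1 : ℕ) : ℝ) := by positivity
  rw [div_eq_div_iff hpos.ne' (by positivity)] at heq
  have hx : ν / Real.sin φ * Real.cos φ - ν * (π / 2 - φ) = ((n + 1 : ℕ) : ℝ) * π := by
    field_simp
    linarith
  have hcos : Real.cos φ ≤ 1 := Real.cos_le_one φ
  have hq : 0 < ν / Real.sin φ := by positivity
  have hx1 : ((n + 1 : ℕ) : ℝ) * π + ν * π / 2 - ν * φ ≤ ν / Real.sin φ := by
    nlinarith
  have hjor : 2 / π * φ ≤ Real.sin φ := Real.mul_le_sin hφ.1.le hφ.2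
  have hjor' : 2 * φ ≤ π * Real.sin φ := by
    rw [div_mul_eq_mul_div, div_le_iff₀ hp] at hjor; linarith
  have hsk : Real.sin φ * (((n + 1 : ℕ) : ℝ) * π) ≤ ν := by
    rw [heq]
    have : 0 ≤ (π / 2 - φ) * Real.sin φ := mul_nonneg (by linarith [hφ.2]) hsin.le
    nlinarith
  have hfk : 2 * φ * ((n + 1 : ℕ) : ℝ) ≤ ν := by
    have := mul_le_mul_of_nonneg_right hjor' hk0.le
    linarith
  have hKk : 4 * ν ^ 2 / (ε * π) < ((n + 1 : ℕ) : ℝ) := by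
    refine hK.trans_le ?_
    exact_mod_cast (by omega : K ≤ n + 1)
  rw [div_lt_iff₀ (by positivity)] at hKk
  have hνφ : ν * φ ≤ ε * π / 8 := by
    have h1 : 2 * (ν * φ) * ((n + 1 : ℕ) : ℝ) ≤ ν ^ 2 := by nlinarith
    by_contra hcon
    push Not at hcon
    nlinarith [mul_lt_mul_of_pos_right hcon hk0]
  push_cast at hx1
  linarith
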